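/- arXiv:1012.1128 — 4 statements merged into one kernel-verified Lean document; each statement's English description precedes it below -/
import Mathlib

section
/- If a tile set admits a valid periodic configuration, then it admits a valid bi-periodic configuration. That is, if there exists a valid configuration C : ℤ² → Σ together with a nonzero vector v ∈ ℤ² such that C(x + v) = C(x) for all x ∈ ℤ², then there exists a valid configuration C' : ℤ² → Σ with two ℤ-linearly independent nonzero vectors u, w ∈ ℤ² satisfying C'(x + u) = C'(x) and C'(x + w) = C'(x) for all x ∈ ℤ². -/
/-!
The idea is to cut the plane into strips parallel to the period `v` and glue a strip to itself.

Let `v = (a, b)`, let `ht v x = a x₂ - b x₁` be the height of `x` over the line spanned by `v`, and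
let `w₀ = (-b, a)`, whose height is `N = a² + b² > 0`. Let `K` exceed the range of heights inside
every forbidden pattern. Since `C` is `v`-periodic, its restriction to a strip of height `K` is
determined by finitely many cells (`finite_cells`), so by the pigeonhole principle two translates of
`C` by different multiples of `w₀` agree on that strip (`exists_strip_repeat`). Hence some translate
`E` of `C` satisfies `E (x + u) = E x` whenever `0 ≤ ht v x < K`, where `u` is a positive multiple
of `w₀`. Repeating the slab `0 ≤ ht v x < ht v u` of `E` along `u` gives a configuration `C'` with
periods `v` and `u`. It coincides with `E` on the slab `0 ≤ ht v x < ht v u + K`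
(`glue_eq`), and every window of height less than `K` can be moved into this slab by a multiple
of `u`; so every forbidden pattern appearing in `C'` would appear in `C`.
-/

/-- A pattern is a finite domain together with a symbol assignment. -/
def PatternAppears {Γ : Type*} (D : Finset (ℤ × ℤ)) (P : (ℤ × ℤ) → Γ)
    (C : (ℤ × ℤ) → Γ) : Prop :=
  ∃ v : ℤ × ℤ, ∀ x ∈ D, P x = C (x + v)

/-- A configuration is valid for a tile set (finite set of forbidden patterns)
if no forbidden pattern appears in it. -/
def ValidConfig {Γ : Type*} (F : Finset ((Finset (ℤ × ℤ)) × ((ℤ × ℤ) → Γ)))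
    (C : (ℤ × ℤ) → Γ) : Prop :=
  ∀ P ∈ F, ¬ PatternAppears P.1 P.2 C

/-- The height of `x` over the line spanned by `v`: the determinant of `v` and `x`. -/
def ht (v x : ℤ × ℤ) : ℤ := v.1 * x.2 - v.2 * x.1

lemma ht_add (v x y : ℤ × ℤ) : ht v (x + y) = ht v x + ht v y := by
  simp only [ht, Prod.fst_add, Prod.snd_add]; ring

lemma ht_smul (v : ℤ × ℤ) (n : ℤ) (x : ℤ × ℤ) : ht v (n • x) = n * ht v x := by
  simp only [ht, Prod.smul_fst, Prod.smul_snd, smul_eq_mul]; ring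

lemma ht_self (v : ℤ × ℤ) : ht v v = 0 := by
  simp only [ht]; ring

lemma normSq_pos {v : ℤ × ℤ} (hv : v ≠ 0) : 0 < v.1 * v.1 + v.2 * v.2 := by
  by_contra h
  apply hv
  have h1 : v.1 = 0 := by nlinarith [mul_self_nonneg v.1, mul_self_nonneg v.2]
  have h2 : v.2 = 0 := by nlinarith [mul_self_nonneg v.1, mul_self_nonneg v.2]
  exact Prod.ext h1 h2

lemma smul_period {Γ : Type*} {C : ℤ × ℤ → Γ} {v : ℤ × ℤ}
    (hper : ∀ x, C (x + v) = C x) (n : ℤ) (x : ℤ × ℤ) : C (x + n • v) = C x := by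
  have h : Function.Periodic C v := hper
  exact h.zsmul n x

/-- A strip of height `K` parallel to `v` has finitely many cells in a fundamental domain for the
translation by `v`. -/
lemma finite_cells {v : ℤ × ℤ} (hv : v ≠ 0) (K : ℤ) :
    {y : ℤ × ℤ | (0 ≤ ht v y ∧ ht v y < K) ∧
      (0 ≤ v.1 * y.1 + v.2 * y.2 ∧ v.1 * y.1 + v.2 * y.2 < v.1 * v.1 + v.2 * v.2)}.Finite := by
  have hN := normSq_pos hv
  refine Set.Finite.of_finite_image (f := fun y => (ht v y, v.1 * y.1 + v.2 * y.2))
    (((Set.finite_Ico (0 : ℤ) K).prod (Set.finite_Ico 0 (v.1 * v.1 + v.2 * v.2))).subset ?_) ?_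
  · rintro _ ⟨y, hy, rfl⟩
    exact hy
  · intro x _ y _ hxy
    obtain ⟨h1, h2⟩ := Prod.ext_iff.mp hxy
    simp only [ht] at h1 h2
    refine Prod.ext (mul_left_cancel₀ hN.ne' ?_) (mul_left_cancel₀ hN.ne' ?_)
    · linear_combination v.1 * h2 - v.2 * h1
    · linear_combination v.2 * h2 + v.1 * h1

/-- Pigeonhole: a `v`-periodic configuration has a translate that, on a strip of height `K`, is
invariant under some vector `u` of positive height. -/
lemma exists_strip_repeat {Γ : Type*} [Finite Γ] {C : ℤ × ℤ → Γ} {v : ℤ × ℤ} (hv : v ≠ 0)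
    (hper : ∀ x, C (x + v) = C x) (K : ℤ) :
    ∃ t u : ℤ × ℤ, 0 < ht v u ∧
      ∀ x, 0 ≤ ht v x → ht v x < K → C (x + u + t) = C (x + t) := by
  have hN := normSq_pos hv
  have : Finite _ := (finite_cells hv K).to_subtype
  obtain ⟨k, l, hkl, heq⟩ := Finite.exists_ne_map_eq_of_infinite
    (fun (k : ℕ) (y : {y : ℤ × ℤ | (0 ≤ ht v y ∧ ht v y < K) ∧
      (0 ≤ v.1 * y.1 + v.2 * y.2 ∧ v.1 * y.1 + v.2 * y.2 < v.1 * v.1 + v.2 * v.2)}) =>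
      C (y.1 + (k : ℤ) • (-v.2, v.1)))
  wlog hlt : k < l generalizing k l
  · exact this l k hkl.symm heq.symm (by omega)
  refine ⟨(k : ℤ) • (-v.2, v.1), ((l : ℤ) - k) • (-v.2, v.1), ?_, fun x h0 hK => ?_⟩
  · rw [ht_smul]
    refine mul_pos (by omega) ?_
    simp only [ht]; linarith
  · -- Translate `x` by a multiple of `v` into the finite set of cells.
    set q := (v.1 * x.1 + v.2 * x.2) / (v.1 * v.1 + v.2 * v.2) with hq
    have hht : ht v (x + (-q) • v) = ht v x := by rw [ht_add, ht_smul, ht_self]; ring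
    have hdot : v.1 * (x + (-q) • v).1 + v.2 * (x + (-q) • v).2
        = (v.1 * x.1 + v.2 * x.2) % (v.1 * v.1 + v.2 * v.2) := by
      rw [Int.emod_def, ← hq]
      simp only [Prod.fst_add, Prod.snd_add, Prod.smul_fst, Prod.smul_snd, smul_eq_mul]; ring
    have h := congrFun heq ⟨x + (-q) • v, ⟨by rw [hht]; exact ⟨h0, hK⟩, by
      rw [hdot]; exact ⟨Int.emod_nonneg _ hN.ne', Int.emod_lt_of_pos _ hN⟩⟩⟩
    simp only [add_right_comm x ((-q) • v), smul_period hper] at h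
    rw [h, add_assoc, ← add_smul, sub_add_cancel]

/-- The configuration obtained by repeating the slab `0 ≤ ht v x < ht v u` of `E` along `u`. -/
def glue {Γ : Type*} (E : ℤ × ℤ → Γ) (v u x : ℤ × ℤ) : Γ :=
  E (x + (-(ht v x / ht v u)) • u)

lemma glue_add_left {Γ : Type*} {E : ℤ × ℤ → Γ} {v : ℤ × ℤ} (u : ℤ × ℤ)
    (hper : ∀ x, E (x + v) = E x) (x : ℤ × ℤ) : glue E v u (x + v) = glue E v u x := by
  unfold glue
  rw [ht_add, ht_self, add_zero, add_right_comm, hper]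

lemma glue_add_right {Γ : Type*} (E : ℤ × ℤ → Γ) {v u : ℤ × ℤ} (hu : 0 < ht v u)
    (x : ℤ × ℤ) : glue E v u (x + u) = glue E v u x := by
  unfold glue
  rw [ht_add, Int.add_ediv_of_dvd_right dvd_rfl, Int.ediv_self hu.ne']
  congr 1
  module

lemma strip_iterate {Γ : Type*} {E : ℤ × ℤ → Γ} {v u : ℤ × ℤ} {K : ℤ} (hu : 0 < ht v u)
    (hE : ∀ x, 0 ≤ ht v x → ht v x < K → E (x + u) = E x) (j : ℕ) (y : ℤ × ℤ)
    (h0 : 0 ≤ ht v y) (hK : ht v y + j * ht v u < ht v u + K) :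
    E (y + (j : ℤ) • u) = E y := by
  induction j with
  | zero => simp
  | succ j ih =>
    push_cast at hK ⊢
    have hj : 0 ≤ (j : ℤ) * ht v u := by positivity
    rw [add_smul, one_smul, ← add_assoc, hE, ih]
    · linarith
    · rw [ht_add, ht_smul]; linarith
    · rw [ht_add, ht_smul]; linarith

/-- The glued configuration agrees with `E` beyond the repeated slab, up to height `K` more. -/
lemma glue_eq {Γ : Type*} {E : ℤ × ℤ → Γ} {v u : ℤ × ℤ} {K : ℤ} (hu : 0 < ht v u)
    (hE : ∀ x, 0 ≤ ht v x → ht v x < K → E (x + u) = E x) (x : ℤ × ℤ)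
    (h0 : 0 ≤ ht v x) (hK : ht v x < ht v u + K) : glue E v u x = E x := by
  unfold glue
  obtain ⟨j, hj⟩ := Int.eq_ofNat_of_zero_le (Int.ediv_nonneg h0 hu.le)
  have hm := Int.emod_nonneg (ht v x) hu.ne'
  rw [Int.emod_def, hj] at hm
  have hh : ht v (x + (-(j : ℤ)) • u) = ht v x - ht v u * j := by
    rw [ht_add, ht_smul]; ring
  have h := strip_iterate hu hE j (x + (-(j : ℤ)) • u) (by rw [hh]; exact hm)
    (by rw [hh]; linarith)
  rw [hj, ← h]
  congr 1
  module

lemma exists_ht_bound {Γ : Type*} (F : Finset (Finset (ℤ × ℤ) × (ℤ × ℤ → Γ))) (v : ℤ × ℤ) :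
    ∃ B : ℤ, ∀ P ∈ F, ∀ x ∈ P.1, |ht v x| ≤ B := by
  classical
  obtain ⟨B, hB⟩ := ((F.biUnion Prod.fst).image fun x => |ht v x|).bddAbove
  exact ⟨B, fun P hP x hx => hB (by
    simp only [Finset.coe_image, Finset.coe_biUnion]
    exact ⟨x, Set.mem_biUnion hP hx, rfl⟩)⟩

/-- If a tile set admits a valid periodic configuration, then it admits a valid
bi-periodic configuration. -/
theorem valid_periodic_implies_valid_biperiodic
    {Γ : Type*} [Fintype Γ] [Nonempty Γ]
    (F : Finset ((Finset (ℤ × ℤ)) × ((ℤ × ℤ) → Γ)))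
    (C : (ℤ × ℤ) → Γ) (v : ℤ × ℤ)
    (hvalid : ValidConfig F C)
    (hv : v ≠ 0)
    (hper : ∀ x : ℤ × ℤ, C (x + v) = C x) :
    ∃ (C' : (ℤ × ℤ) → Γ) (u w : ℤ × ℤ),
      ValidConfig F C' ∧
      u ≠ 0 ∧ w ≠ 0 ∧ LinearIndependent ℤ ![u, w] ∧
      (∀ x : ℤ × ℤ, C' (x + u) = C' x) ∧
      (∀ x : ℤ × ℤ, C' (x + w) = C' x) := by
  obtain ⟨B, hB⟩ := exists_ht_bound F v
  obtain ⟨t, u, hu, hE⟩ := exists_strip_repeat hv hper (2 * B + 1)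
  have hEper : ∀ x, C (x + v + t) = C (x + t) := fun x => by rw [add_right_comm, hper]
  have hu0 : u ≠ 0 := by
    rintro rfl
    simp [ht] at hu
  refine ⟨glue (fun x => C (x + t)) v u, v, u, ?_, hv, hu0, ?_, glue_add_left u hEper,
    glue_add_right _ hu⟩
  · rintro P hP ⟨s, hs⟩
    -- Move the window by a multiple of `u` so that its lowest possible height lies in `[0, ht v u)`.
    set q := (ht v s - B) / ht v u with hq
    refine hvalid P hP ⟨s + (-q) • u + t, fun x hx => ?_⟩
    have hx' := abs_le.mp (hB P hP x hx)
    have h1 := Int.emod_nonneg (ht v s - B) hu.ne'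
    have h2 := Int.emod_lt_of_pos (ht v s - B) hu
    rw [Int.emod_def, ← hq] at h1 h2
    have hh : ht v (x + s + (-q) • u) = ht v x + ht v s - ht v u * q := by
      rw [ht_add, ht_add, ht_smul]; ring
    rw [hs x hx, ← smul_period (glue_add_right _ hu) (-q) (x + s),
      glue_eq hu hE _ (by linarith) (by linarith)]
    simp only [add_assoc]
  · rw [LinearIndependent.pair_iff]
    intro m n h
    have hn : n = 0 := by
      have := congrArg (ht v) h
      rw [ht_add, ht_smul, ht_smul, ht_self] at this
      simpa [hu.ne'] using this.trans (show ht v 0 = 0 by simp [ht])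
    subst hn
    rw [zero_smul, add_zero] at h
    exact ⟨(smul_eq_zero.mp h).resolve_right hv, rfl⟩
end

section
/- If a tile set admits a valid periodic configuration, then it admits a valid configuration having both a nonzero horizontal period and a nonzero vertical period; that is, there exist a valid configuration C' : ℤ² → Σ and nonzero integers h, k such that C'(x + (h, 0)) = C'(x) and C'(x + (0, k)) = C'(x) for all x ∈ ℤ². -/
/-- A period may be added any integer number of times. -/
lemma period_zsmul {Γ : Type*} {C : ℤ × ℤ → Γ} {v : ℤ × ℤ}
    (h : ∀ x, C (x + v) = C x) (k : ℤ) (x : ℤ × ℤ) : C (x + k • v) = C x := by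
  have hp : Function.Periodic C v := h
  exact hp.zsmul k x

/-- Pigeonhole on a strip `0 ≤ L x ≤ N`.  The functional `M` serves as a coordinate along `v`:
jointly with `L` it separates points, so the strip is finite modulo `v`. -/
lemma exists_repeat {Γ : Type*} [Finite Γ] (C : ℤ × ℤ → Γ) (v w : ℤ × ℤ)
    (hper : ∀ x, C (x + v) = C x) (L M : ℤ × ℤ →+ ℤ) (hLv : L v = 0) (hMv : M v ≠ 0)
    (hinj : Function.Injective fun x => (L x, M x)) (N : ℤ) :
    ∃ n p : ℤ, 0 < p ∧ ∀ x, 0 ≤ L x → L x ≤ N → C (x + n • w + p • w) = C (x + n • w) := by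
  let T : Set (ℤ × ℤ) := (fun x => (L x, M x)) ⁻¹' (Set.Icc 0 N ×ˢ Set.Icc 0 |M v|)
  have hT : T.Finite :=
    ((Set.finite_Icc _ _).prod (Set.finite_Icc _ _)).preimage hinj.injOn
  have : Finite T := hT
  obtain ⟨i, j, hij, hEq⟩ := Finite.exists_ne_map_eq_of_infinite
    (fun (n : ℕ) (t : T) => C (t.1 + (n : ℤ) • w))
  have key : ∀ x, 0 ≤ L x → L x ≤ N → C (x + (i : ℤ) • w) = C (x + (j : ℤ) • w) := by
    intro x h0 hN
    have hmem : x + (-(M x / M v)) • v ∈ T := by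
      have h1 := Int.emod_nonneg (M x) hMv
      have h2 := Int.emod_lt_abs (M x) hMv
      have h3 := Int.emod_add_mul_ediv (M x) (M v)
      have h4 : M x + -(M x / M v) * M v = M x % M v := by linarith
      simp only [T, Set.mem_preimage, Set.mem_prod, Set.mem_Icc, map_add, map_zsmul, hLv,
        smul_eq_mul, mul_zero, add_zero, h4]
      exact ⟨⟨h0, hN⟩, h1, h2.le⟩
    have h := congrFun hEq ⟨_, hmem⟩
    simp only [add_right_comm x _ _, period_zsmul hper] at h
    exact h
  rcases lt_or_gt_of_ne hij with h | h
  · refine ⟨i, (j : ℤ) - i, by omega, fun x h0 hN => ?_⟩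
    rw [key x h0 hN, add_assoc, ← add_smul, add_sub_cancel]
  · refine ⟨j, (i : ℤ) - j, by omega, fun x h0 hN => ?_⟩
    rw [← key x h0 hN, add_assoc, ← add_smul, add_sub_cancel]

/-- A valid configuration of period `v` yields a valid one with periods `v` and `p • w`, for any
vector `w` transversal to `v`. -/
lemma exists_two_periods {Γ : Type*} [Finite Γ]
    (F : Finset ((Finset (ℤ × ℤ)) × ((ℤ × ℤ) → Γ))) (C : ℤ × ℤ → Γ) (v w : ℤ × ℤ)
    (hvalid : ValidConfig F C)
    (hper : ∀ x, C (x + v) = C x) (L M : ℤ × ℤ →+ ℤ) (hLv : L v = 0) (hMv : M v ≠ 0)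
    (hinj : Function.Injective fun x => (L x, M x)) (hLw : 0 < L w) :
    ∃ (C' : ℤ × ℤ → Γ) (p : ℤ), 0 < p ∧ ValidConfig F C' ∧
      (∀ x, C' (x + v) = C' x) ∧ ∀ x, C' (x + p • w) = C' x := by
  obtain ⟨B, hB⟩ : ∃ B : ℤ, ∀ P ∈ F, ∀ d ∈ P.1, |L d| ≤ B := by
    classical
    obtain ⟨B, hB⟩ := ((F.biUnion fun P => P.1).image fun d => |L d|).bddAbove
    exact ⟨B, fun P hP d hd => hB (Finset.mem_coe.2 (Finset.mem_image_of_mem (fun d => |L d|)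
      (Finset.mem_biUnion.2 ⟨P, hP, hd⟩)))⟩
  obtain ⟨n, p, hp, hrep⟩ := exists_repeat C v w hper L M hLv hMv hinj (2 * B)
  have hs : 0 < p * L w := mul_pos hp hLw
  set s := p * L w with hsdef
  let C' : ℤ × ℤ → Γ := fun x => C (x + n • w + (-(L x / s)) • (p • w))
  have hC'w : ∀ x, C' (x + p • w) = C' x := by
    intro x
    have h1 : L (x + p • w) / s = L x / s + 1 := by
      rw [map_add, map_zsmul, smul_eq_mul, ← hsdef, Int.add_ediv_of_dvd_right dvd_rfl,
        Int.ediv_self hs.ne']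
    simp only [C', h1]
    congr 1
    module
  have hC'v : ∀ x, C' (x + v) = C' x := by
    intro x
    simp only [C', map_add, hLv, add_zero]
    rw [add_right_comm x v, add_right_comm _ v, hper]
  -- Induction on a bound for `L x`, descending by `p • w`, covers the case `s ≤ 2 * B`.
  have hagree : ∀ (m : ℕ) (x : ℤ × ℤ), L x < m → 0 ≤ L x → L x ≤ s + 2 * B →
      C' x = C (x + n • w) := by
    intro m
    induction m with
    | zero => intro x h1 h2; simp at h1; omega
    | succ m ih =>
      intro x h1 h2 h3
      rcases lt_or_ge (L x) s with h | h
      · simp [C', Int.ediv_eq_zero_of_lt h2 h]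
      · have hL : L (x - p • w) = L x - s := by
          rw [map_sub, map_zsmul, smul_eq_mul]
        have h4 := hC'w (x - p • w)
        rw [sub_add_cancel] at h4
        push_cast at h1
        rw [h4, ih _ (by omega) (by omega) (by omega),
          ← hrep _ (by omega) (by omega)]
        congr 1
        abel
  refine ⟨C', p, hp, ?_, hC'v, hC'w⟩
  rintro P hP ⟨u, hu⟩
  -- Move the occurrence so that `B ≤ L u < B + s`.
  set q := -((L u - B) / s) with hq
  have h1 := Int.emod_nonneg (L u - B) hs.ne'
  have h2 := Int.emod_lt_of_pos (L u - B) hs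
  have h3 := Int.emod_add_mul_ediv (L u - B) s
  refine hvalid P hP ⟨u + q • (p • w) + n • w, fun x hx => ?_⟩
  have hLu : L (x + (u + q • (p • w))) = L x + B + (L u - B) % s := by
    simp only [map_add, map_zsmul, smul_eq_mul, ← hsdef]
    rw [hq]
    linarith
  have hb := abs_le.1 (hB P hP x hx)
  rw [hu x hx, ← period_zsmul hC'w q, add_assoc x u,
    hagree (L (x + (u + q • (p • w))) + 1).toNat _ (by omega) (by omega) (by omega)]
  congr 1
  abel

/-- If a tile set admits a valid periodic configuration, then it admits a valid
configuration with both a nonzero horizontal and a nonzero vertical period. -/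
theorem valid_periodic_implies_valid_hv_periodic
    {Γ : Type*} [Fintype Γ] [Nonempty Γ]
    (F : Finset ((Finset (ℤ × ℤ)) × ((ℤ × ℤ) → Γ)))
    (C : (ℤ × ℤ) → Γ) (v : ℤ × ℤ)
    (hvalid : ValidConfig F C)
    (hv : v ≠ 0)
    (hper : ∀ x : ℤ × ℤ, C (x + v) = C x) :
    ∃ (C' : (ℤ × ℤ) → Γ) (h k : ℤ),
      ValidConfig F C' ∧ h ≠ 0 ∧ k ≠ 0 ∧
      (∀ x : ℤ × ℤ, C' (x + (h, 0)) = C' x) ∧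
      (∀ x : ℤ × ℤ, C' (x + (0, k)) = C' x) := by
  obtain ⟨a, b⟩ := v
  by_cases ha : a = 0
  · subst ha
    have hb : b ≠ 0 := by rintro rfl; exact hv rfl
    obtain ⟨C', p, hp, hval, h1, h2⟩ := exists_two_periods F C (0, b) (1, 0) hvalid hper
      (AddMonoidHom.fst ℤ ℤ) (AddMonoidHom.snd ℤ ℤ) rfl hb (fun _ _ h => h) (by simp)
    exact ⟨C', p, b, hval, hp.ne', hb, by simpa using h2, h1⟩
  · -- The factor `a` makes `L (0, 1) = a ^ 2` positive whatever the sign of `a`.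
    obtain ⟨C', p, hp, hval, h1, h2⟩ := exists_two_periods F C (a, b) (0, 1) hvalid hper
      ((a * a) • AddMonoidHom.snd ℤ ℤ - (a * b) • AddMonoidHom.fst ℤ ℤ) (AddMonoidHom.fst ℤ ℤ)
      (by simp; ring) ha
      (by
        rintro ⟨x, y⟩ ⟨x', y'⟩ h
        simp at h
        obtain ⟨h, rfl⟩ := h
        simpa [ha] using h)
      (by simpa using mul_self_pos.2 ha)
    refine ⟨C', p * a, p, hval, mul_ne_zero hp.ne' ha, hp.ne', fun x => ?_, by simpa using h2⟩
    -- `(p * a, 0) = p • (a, b) - b • (p • (0, 1))`.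
    rw [← period_zsmul h2 b, ← period_zsmul h1 p x]
    congr 1
    ext <;> simp
    ring
end

section
/- Let v ∈ ℤ² and let 𝒮 ⊆ ℤ² × ℕ be a set of squares (each given by its lower-left corner a ∈ ℤ² and its side length s ≥ 1) such that: (i) the boundaries of distinct squares of 𝒮 are pairwise disjoint; (ii) 𝒮 contains squares of arbitrarily large side, i.e. for every n ∈ ℕ there exists (a, s) ∈ 𝒮 with s ≥ n; and (iii) 𝒮 is invariant under translation by v, i.e. (a, s) ∈ 𝒮 implies (a + v, s) ∈ 𝒮. Then v = 0. In particular, a picture containing arbitrarily large pairwise non-intersecting square boundaries cannot be invariant under any nonzero translation. -/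
/-! A square of side `s ≥ |v.1| + |v.2|` and its translate by `v` always have a common boundary
point: a vertical edge of the translate crosses a horizontal edge of the original square. By
disjointness the two squares are therefore equal, so `v = 0`. -/

/-- The boundary of the square with lower-left corner `a` and side `s`. -/
def squareBoundary (a : ℤ × ℤ) (s : ℤ) : Set (ℤ × ℤ) :=
  {p | ((p.1 = a.1 ∨ p.1 = a.1 + s) ∧ a.2 ≤ p.2 ∧ p.2 ≤ a.2 + s) ∨
       ((p.2 = a.2 ∨ p.2 = a.2 + s) ∧ a.1 ≤ p.1 ∧ p.1 ≤ a.1 + s)}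

/-- A family of arbitrarily large squares with pairwise disjoint boundaries
cannot be invariant under a nonzero translation. -/
theorem arbitrarily_large_disjoint_squares_not_periodic
    (v : ℤ × ℤ) (S : Set ((ℤ × ℤ) × ℕ))
    (hside : ∀ p ∈ S, 1 ≤ p.2)
    (hdisj : ∀ p ∈ S, ∀ q ∈ S, p ≠ q →
      Disjoint (squareBoundary p.1 (p.2 : ℤ)) (squareBoundary q.1 (q.2 : ℤ)))
    (hlarge : ∀ n : ℕ, ∃ p ∈ S, n ≤ p.2)
    (hinv : ∀ p ∈ S, ((p.1 + v, p.2) : (ℤ × ℤ) × ℕ) ∈ S) :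
    v = 0 := by
  obtain ⟨⟨a, s⟩, hp, hs⟩ := hlarge (v.1.natAbs + v.2.natAbs)
  obtain ⟨x, y⟩ := v
  by_contra hv
  have hne : ((a, s) : (ℤ × ℤ) × ℕ) ≠ (a + (x, y), s) := by
    intro h
    exact hv (left_eq_add.mp (Prod.ext_iff.mp h).1)
  -- The left edge of the translate is used if it moves right, its right edge otherwise; that edge
  -- meets the top edge of the original if the translate moves up, the bottom edge otherwise.
  refine Set.disjoint_left.mp (hdisj _ hp _ (hinv _ hp) hne)
    (show (if 0 ≤ x then a.1 + x else a.1 + x + s, if 0 ≤ y then a.2 + s else a.2) ∈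
      squareBoundary a s from ?_) ?_
  · right
    dsimp only at hs ⊢
    split_ifs <;> omega
  · left
    simp only [Prod.fst_add, Prod.snd_add] at hs ⊢
    split_ifs <;> omega
end

section
/- Let a ∈ ℤ², let s ≥ 1 be an integer, and let v ∈ ℤ² be a nonzero vector with |v₁| ≤ s and |v₂| ≤ s. Then the boundary of the square with lower-left corner a and side s intersects the boundary of the square with lower-left corner a + v and side s; that is, a square boundary translated by a nonzero vector no larger than its side length must meet its original position. -/
/-- A square boundary translated by a nonzero vector no larger (in each
coordinate) than its side length must intersect its original position. -/
theorem square_boundary_translate_intersects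
    (a : ℤ × ℤ) (s : ℤ) (hs : 1 ≤ s) (v : ℤ × ℤ) (hv : v ≠ 0)
    (h1 : |v.1| ≤ s) (h2 : |v.2| ≤ s) :
    (squareBoundary a s ∩ squareBoundary (a + v) s).Nonempty := by
  obtain ⟨a₁, a₂⟩ := a
  obtain ⟨v₁, v₂⟩ := v
  simp only [abs_le] at h1 h2
  -- The witness is where a vertical side of the original square crosses a horizontal side of
  -- the translate: the right side if `0 ≤ v₁` (else the left), and the bottom side of the
  -- translate if `0 ≤ v₂` (else its top).
  refine ⟨(if 0 ≤ v₁ then a₁ + s else a₁, if 0 ≤ v₂ then a₂ + v₂ else a₂ + v₂ + s),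
    Or.inl ?_, Or.inr ?_⟩ <;> simp only [Prod.mk_add_mk] <;> split_ifs <;> omega
end
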